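/- Let A be a commutative noetherian local ring, let x, y ∈ A be an exact pair of zero divisors, and let a ∈ A. Then the A-modules G_a = coker γ_a and H_a = coker η_a are totally reflexive. Furthermore, G_a and H_a are each other's A-duals: G_a ≅ Hom_A(H_a, A) and H_a ≅ Hom_A(G_a, A) as A-modules. -/

import Mathlib

/-!
Formalization of results from "Construction of totally reflexive modules
from an exact pair of zero divisors" by Henrik Holm.
-/

noncomputable section

/-- Non-units `x, y` in `A` form an *exact pair of zero divisors* if
`Ann_A(x) = (y)` and `Ann_A(y) = (x)`. -/
def IsExactZeroDivisorPair {A : Type*} [CommRing A] (x y : A) : Prop :=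
  ¬ IsUnit x ∧ ¬ IsUnit y ∧
    (∀ a : A, a * x = 0 ↔ a ∈ Ideal.span {y}) ∧
    (∀ a : A, a * y = 0 ↔ a ∈ Ideal.span {x})

open Matrix in
/-- The matrix `γ_a = [[x, a], [0, y]]`. -/
def gammaMat {A : Type*} [CommRing A] (x y a : A) : Matrix (Fin 2) (Fin 2) A :=
  !![x, a; 0, y]

open Matrix in
/-- The matrix `η_a = [[y, -a], [0, x]]`. -/
def etaMat {A : Type*} [CommRing A] (x y a : A) : Matrix (Fin 2) (Fin 2) A :=
  !![y, -a; 0, x]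

/-- `G_a`, the cokernel of `γ_a : A² → A²`. -/
abbrev Gmod {A : Type*} [CommRing A] (x y a : A) : Type _ :=
  (Fin 2 → A) ⧸ LinearMap.range (Matrix.toLin' (gammaMat x y a))

/-- `H_a`, the cokernel of `η_a : A² → A²`. -/
abbrev Hmod {A : Type*} [CommRing A] (x y a : A) : Type _ :=
  (Fin 2 → A) ⧸ LinearMap.range (Matrix.toLin' (etaMat x y a))

universe u

open CategoryTheory in
/-- A finitely generated `A`-module `G` is *totally reflexive* if
`Ext_A^i(G, A) = 0` and `Ext_A^i(Hom_A(G, A), A) = 0` for all `i > 0`, and the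
biduality map `G → Hom_A(Hom_A(G, A), A)` is an isomorphism. -/
def IsTotallyReflexive (A : Type u) [CommRing A] (M : Type u)
    [AddCommGroup M] [Module A M] : Prop :=
  Module.Finite A M ∧
  (∀ i : ℕ, 0 < i → Subsingleton
    (((Ext A (ModuleCat A) i).obj (Opposite.op (ModuleCat.of A M))).obj
      (ModuleCat.of A A))) ∧
  (∀ i : ℕ, 0 < i → Subsingleton
    (((Ext A (ModuleCat A) i).obj
      (Opposite.op (ModuleCat.of A (Module.Dual A M)))).obj (ModuleCat.of A A))) ∧
  Function.Bijective (Module.Dual.eval A M)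

/-!
The matrix `η_a` is the adjugate of `γ_a`, hence its adjoint for the symplectic form `ω` on `A²`,
and since `x, y` is an exact pair, the 2-periodic complex in which `γ_a` and `η_a` alternate is
exact. It therefore resolves both cokernels by free modules, and being self-dual under `ω` it stays
exact after applying `Hom(-, A)`, so all higher Ext groups into `A` vanish. Moreover
`(v, w) ↦ ω(η_a v, w)` is a perfect pairing between `G_a` and `H_a`, which gives both the duality
and the reflexivity.
-/

section PeriodicResolution

open CategoryTheory Limits

lemma exactAt_alternatingConst {C : Type*} [Category C] [HasZeroMorphisms C]
    {c : ComplexShape ℕ} [DecidableRel c.Rel] (hc : ∀ i j, c.Rel i j → Odd (i + j))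
    {X : C} {φ ψ : X ⟶ X} {hφψ : φ ≫ ψ = 0} {hψφ : ψ ≫ φ = 0}
    (exact_φψ : (ShortComplex.mk φ ψ hφψ).Exact) (exact_ψφ : (ShortComplex.mk ψ φ hψφ).Exact)
    {j : ℕ} (hprev : c.Rel (c.prev j) j) (hnext : c.Rel j (c.next j)) :
    (HomologicalComplex.alternatingConst X hφψ hψφ hc).ExactAt j := by
  rcases Nat.even_or_odd j with hj | hj
  · exact ShortComplex.exact_of_iso
      (HomologicalComplex.alternatingConstScIsoEven X hφψ hψφ hc hprev hnext hj).symm exact_ψφ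
  · exact ShortComplex.exact_of_iso
      (HomologicalComplex.alternatingConstScIsoOdd X hφψ hψφ hc hprev hnext hj).symm exact_φψ

variable {A : Type u} [CommRing A] {F M : Type u} [AddCommGroup F] [Module A F]
  [AddCommGroup M] [Module A M] {f g : F →ₗ[A] F} {p : F →ₗ[A] M}

/-- The chain complex `⋯ → F →[f] F →[g] F →[f] F → 0`, whose last differential is `f`. -/
def periodicComplex (hfg : Function.Exact f g) (hgf : Function.Exact g f) :
    ChainComplex (ModuleCat.{u} A) ℕ :=
  HomologicalComplex.alternatingConst (ModuleCat.of A F)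
    (φ := ModuleCat.ofHom g) (ψ := ModuleCat.ofHom f)
    (ModuleCat.hom_ext hgf.linearMap_comp_eq_zero) (ModuleCat.hom_ext hfg.linearMap_comp_eq_zero)
    fun _ _ => ComplexShape.down_nat_odd_add

lemma periodicComplex_d_one_zero (hfg : Function.Exact f g) (hgf : Function.Exact g f) :
    (periodicComplex hfg hgf).d 1 0 = ModuleCat.ofHom f := by
  simp only [periodicComplex, HomologicalComplex.alternatingConst_d, ComplexShape.down_Rel,
    zero_add, ↓reduceIte, Nat.not_even_one]
  rfl

lemma periodicComplex_exactAt_succ (hfg : Function.Exact f g) (hgf : Function.Exact g f) (n : ℕ) :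
    (periodicComplex hfg hgf).ExactAt (n + 1) :=
  exactAt_alternatingConst _ ((ShortComplex.ShortExact.moduleCat_exact_iff_function_exact _).2 hgf)
    ((ShortComplex.ShortExact.moduleCat_exact_iff_function_exact _).2 hfg) (by simp) (by simp)

/-- The projective resolution `⋯ →[f] F →[g] F →[f] F →[p] M → 0`. -/
def periodicResolution [Module.Projective A F] (hfg : Function.Exact f g)
    (hgf : Function.Exact g f) (hfp : Function.Exact f p) (hp : Function.Surjective p) :
    ProjectiveResolution (ModuleCat.of A M) where
  complex := periodicComplex hfg hgf
  projective _ := inferInstanceAs (Projective (ModuleCat.of A F))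
  π := ((periodicComplex hfg hgf).toSingle₀Equiv _).symm ⟨ModuleCat.ofHom p, by
    rw [periodicComplex_d_one_zero]
    exact ModuleCat.hom_ext hfp.linearMap_comp_eq_zero⟩
  quasiIso := ⟨fun
    | 0 => by
      rw [ChainComplex.quasiIsoAt₀_iff, ShortComplex.quasiIso_iff_of_zeros' _ rfl rfl rfl]
      constructor
      · rw [ShortComplex.ShortExact.moduleCat_exact_iff_function_exact]
        simpa [periodicComplex_d_one_zero, ChainComplex.toSingle₀Equiv] using! hfp
      · rw [ModuleCat.epi_iff_surjective]
        simpa [ChainComplex.toSingle₀Equiv] using! hp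
    | n + 1 => by
      rw [quasiIsoAt_iff_exactAt' (hL := ChainComplex.exactAt_succ_single_obj ..)]
      exact periodicComplex_exactAt_succ hfg hgf n⟩

variable {N : Type u} [AddCommGroup N] [Module A N]

/-- `Hom(-, N)` turns the periodic complex into the cochain complex
`0 → Hom(F, N) →[f*] Hom(F, N) →[g*] Hom(F, N) → ⋯`, again alternating. -/
def linearYonedaObjPeriodicComplexIso (hfg : Function.Exact f g) (hgf : Function.Exact g f) :
    (periodicComplex hfg hgf).linearYonedaObj A (ModuleCat.of A N) ≅
      HomologicalComplex.alternatingConst (ModuleCat.of A (F →ₗ[A] N))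
        (φ := ModuleCat.ofHom (f.lcomp A N)) (ψ := ModuleCat.ofHom (g.lcomp A N))
        (by ext; simp [hgf.apply_apply_eq_zero]) (by ext; simp [hfg.apply_apply_eq_zero])
        fun _ _ => ComplexShape.up_nat_odd_add :=
  HomologicalComplex.Hom.isoOfComponents (fun _ => ModuleCat.homLinearEquiv.toModuleIso) <| by
    rintro i _ ⟨rfl⟩
    by_cases hi : Even i <;>
    · simp only [periodicComplex, HomologicalComplex.alternatingConst_d, ComplexShape.up_Rel,
        ComplexShape.down_Rel, ChainComplex.linearYonedaObj_d, ↓reduceIte, Nat.even_add_one, hi,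
        not_true_eq_false, not_false_eq_true]
      rfl

lemma subsingleton_ext_succ_of_periodic [Module.Projective A F] (hfg : Function.Exact f g)
    (hgf : Function.Exact g f) (hfp : Function.Exact f p) (hp : Function.Surjective p)
    (hfg' : Function.Exact (f.lcomp A N) (g.lcomp A N))
    (hgf' : Function.Exact (g.lcomp A N) (f.lcomp A N)) (n : ℕ) :
    Subsingleton (((Ext A (ModuleCat A) (n + 1)).obj (Opposite.op (ModuleCat.of A M))).obj
      (ModuleCat.of A N)) := by
  have exact_hom : ((periodicComplex hfg hgf).linearYonedaObj A (ModuleCat.of A N)).ExactAt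
      (n + 1) :=
    .of_iso (exactAt_alternatingConst _
      ((ShortComplex.ShortExact.moduleCat_exact_iff_function_exact _).2 hfg')
      ((ShortComplex.ShortExact.moduleCat_exact_iff_function_exact _).2 hgf') (by simp) (by simp))
      (linearYonedaObjPeriodicComplexIso hfg hgf).symm
  rw [← ModuleCat.isZero_iff_subsingleton]
  exact ((HomologicalComplex.exactAt_iff_isZero_homology _ _).1 exact_hom).of_iso
    ((periodicResolution hfg hgf hfp hp).isoExt (n + 1) (ModuleCat.of A N))

end PeriodicResolution

section PeriodicDuality

variable {A : Type*} [CommRing A]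

lemma exact_dualMap_of_adjoint {F₁ F₂ F₃ E₁ E₂ E₃ : Type*}
    [AddCommGroup F₁] [Module A F₁] [AddCommGroup F₂] [Module A F₂] [AddCommGroup F₃] [Module A F₃]
    [AddCommGroup E₁] [Module A E₁] [AddCommGroup E₂] [Module A E₂] [AddCommGroup E₃] [Module A E₃]
    (B₁ : F₁ →ₗ[A] E₁ →ₗ[A] A) (B₂ : F₂ →ₗ[A] E₂ →ₗ[A] A) (B₃ : F₃ →ₗ[A] E₃ →ₗ[A] A)
    [B₁.IsPerfPair] [B₂.IsPerfPair] [B₃.IsPerfPair]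
    {f : F₁ →ₗ[A] F₂} {g : F₂ →ₗ[A] F₃} {f' : E₂ →ₗ[A] E₁} {g' : E₃ →ₗ[A] E₂}
    (hf : ∀ v w, B₂ (f v) w = B₁ v (f' w)) (hg : ∀ v w, B₃ (g v) w = B₂ v (g' w))
    (h : Function.Exact g' f') : Function.Exact g.dualMap f.dualMap :=
  .of_ladder_linearEquiv_of_exact (e₁ := B₃.flip.toPerfPair) (e₂ := B₂.flip.toPerfPair)
    (e₃ := B₁.flip.toPerfPair) (by ext; simp [hg]) (by ext; simp [hf]) h

variable {F E : Type*} [AddCommGroup F] [Module A F] [AddCommGroup E] [Module A E]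

/-- The 2-periodic complexes `⋯ →[f] F →[g] F →[f] ⋯` and `⋯ →[f'] E →[g'] E →[f'] ⋯`
are exact, and they are dual to each other under the pairing `B`: `f'` is adjoint to `f` and `g'`
to `g`. For a perfect pairing of finite projective modules, these are the totally acyclic complexes
of period two. -/
structure IsPeriodicDuality (B : F →ₗ[A] E →ₗ[A] A) (f g : F →ₗ[A] F) (f' g' : E →ₗ[A] E) :
    Prop where
  exact_fg : Function.Exact f g
  exact_gf : Function.Exact g f
  exact_fg' : Function.Exact f' g'
  exact_gf' : Function.Exact g' f'
  adjoint_f : ∀ v w, B (f v) w = B v (f' w)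
  adjoint_g : ∀ v w, B (g v) w = B v (g' w)

namespace IsPeriodicDuality

variable {B : F →ₗ[A] E →ₗ[A] A} {f g : F →ₗ[A] F} {f' g' : E →ₗ[A] E}

lemma flip (h : IsPeriodicDuality B f g f' g') : IsPeriodicDuality B.flip f' g' f g where
  exact_fg := h.exact_fg'
  exact_gf := h.exact_gf'
  exact_fg' := h.exact_fg
  exact_gf' := h.exact_gf
  adjoint_f v w := (h.adjoint_f w v).symm
  adjoint_g v w := (h.adjoint_g w v).symm

lemma exact_dualMap_fg [B.IsPerfPair] (h : IsPeriodicDuality B f g f' g') :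
    Function.Exact f.dualMap g.dualMap :=
  exact_dualMap_of_adjoint B B B h.adjoint_g h.adjoint_f h.exact_fg'

lemma exact_dualMap_gf [B.IsPerfPair] (h : IsPeriodicDuality B f g f' g') :
    Function.Exact g.dualMap f.dualMap :=
  exact_dualMap_of_adjoint B B B h.adjoint_f h.adjoint_g h.exact_gf'

/-- The pairing `(v, w) ↦ B (g v) w` of `coker f` with `coker f'`. Under `coker f ≅ im g = ker f` it
is the restriction of `B` to `ker f`, and `ker f` is the annihilator of `im f'`. -/
def cokerPairing (h : IsPeriodicDuality B f g f' g') :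
    (F ⧸ LinearMap.range f) →ₗ[A] (E ⧸ LinearMap.range f') →ₗ[A] A :=
  (B ∘ₗ g).liftQ₂ _ _
    (by rintro _ ⟨v, rfl⟩; ext w; simp [h.exact_fg.apply_apply_eq_zero])
    (by rintro _ ⟨w, rfl⟩; ext v; simp [h.adjoint_g, h.exact_fg'.apply_apply_eq_zero])

@[simp]
lemma cokerPairing_mk (h : IsPeriodicDuality B f g f' g') (v : F) (w : E) :
    h.cokerPairing (Submodule.Quotient.mk v) (Submodule.Quotient.mk w) = B (g v) w :=
  rfl

lemma cokerPairing_flip (h : IsPeriodicDuality B f g f' g') :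
    h.cokerPairing.flip = h.flip.cokerPairing := by
  ext w v
  exact h.adjoint_g v w

lemma cokerPairing_injective [B.IsPerfPair] (h : IsPeriodicDuality B f g f' g') :
    Function.Injective h.cokerPairing := by
  rw [injective_iff_map_eq_zero]
  intro q hq
  obtain ⟨v, rfl⟩ := Submodule.Quotient.mk_surjective _ q
  have hBgv : B (g v) = 0 := by
    ext w
    exact LinearMap.congr_fun hq (Submodule.Quotient.mk w)
  have hgv : g v = 0 := (map_eq_zero_iff B (LinearMap.IsPerfPair.bijective_left B).injective).1 hBgv
  exact (Submodule.Quotient.mk_eq_zero _).2 ((h.exact_fg v).1 hgv)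

lemma cokerPairing_surjective [B.IsPerfPair] (h : IsPeriodicDuality B f g f' g') :
    Function.Surjective h.cokerPairing := by
  intro φ
  obtain ⟨u, hu⟩ := (LinearMap.IsPerfPair.bijective_left B).surjective (φ ∘ₗ Submodule.mkQ _)
  have hBfu : B (f u) = 0 := by
    ext w
    have : (Submodule.Quotient.mk (f' w) : E ⧸ LinearMap.range f') = 0 :=
      (Submodule.Quotient.mk_eq_zero _).2 ⟨w, rfl⟩
    simp [h.adjoint_f, hu, this]
  have hfu : f u = 0 := (map_eq_zero_iff B (LinearMap.IsPerfPair.bijective_left B).injective).1 hBfu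
  obtain ⟨v, rfl⟩ := (h.exact_gf u).1 hfu
  refine ⟨Submodule.Quotient.mk v, ?_⟩
  ext w
  exact LinearMap.congr_fun hu w

instance isPerfPair_cokerPairing [B.IsPerfPair] (h : IsPeriodicDuality B f g f' g') :
    h.cokerPairing.IsPerfPair where
  bijective_left := ⟨h.cokerPairing_injective, h.cokerPairing_surjective⟩
  bijective_right := by
    rw [h.cokerPairing_flip]
    exact ⟨h.flip.cokerPairing_injective, h.flip.cokerPairing_surjective⟩

end IsPeriodicDuality

end PeriodicDuality

namespace IsPeriodicDuality

variable {A F E : Type u} [CommRing A] [AddCommGroup F] [Module A F] [AddCommGroup E] [Module A E]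
  {B : F →ₗ[A] E →ₗ[A] A} [B.IsPerfPair] {f g : F →ₗ[A] F} {f' g' : E →ₗ[A] E}

open CategoryTheory in
lemma subsingleton_ext_succ (h : IsPeriodicDuality B f g f' g') [Module.Projective A F]
    {M : Type u} [AddCommGroup M] [Module A M] (e : (F ⧸ LinearMap.range f) ≃ₗ[A] M) (n : ℕ) :
    Subsingleton (((Ext A (ModuleCat A) (n + 1)).obj (Opposite.op (ModuleCat.of A M))).obj
      (ModuleCat.of A A)) :=
  subsingleton_ext_succ_of_periodic (p := e.toLinearMap ∘ₗ (LinearMap.range f).mkQ)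
    h.exact_fg h.exact_gf (fun v => by simp) (e.surjective.comp (Submodule.mkQ_surjective _))
    h.exact_dualMap_fg h.exact_dualMap_gf n

theorem isTotallyReflexive_coker [Module.Finite A F] [Module.Projective A F] [Module.Projective A E]
    (h : IsPeriodicDuality B f g f' g') : IsTotallyReflexive A (F ⧸ LinearMap.range f) := by
  have : Module.IsReflexive A (F ⧸ LinearMap.range f) := .of_isPerfPair h.cokerPairing
  refine ⟨inferInstance, ?_, ?_, Module.bijective_dual_eval A _⟩
  · rintro (_ | n) hn
    · exact absurd hn (lt_irrefl 0)
    · exact h.subsingleton_ext_succ (.refl A _) n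
  · rintro (_ | n) hn
    · exact absurd hn (lt_irrefl 0)
    · exact h.flip.subsingleton_ext_succ h.cokerPairing.flip.toPerfPair n

end IsPeriodicDuality

section AdjugatePairing

open Matrix

variable {A : Type*} [CommRing A]

lemma isPerfPair_toLinearMap₂' {n : Type*} [Fintype n] [DecidableEq n] {J : Matrix n n A}
    (hJ : IsUnit J) : (toLinearMap₂' A J).IsPerfPair := by
  let := hJ.invertible
  have : toLinearMap₂' A J = (dotProductEquiv A n).toLinearMap.compl₁₂
      (LinearEquiv.refl A (n → A)).toLinearMap (J.toLinearEquiv' ‹_›).toLinearMap :=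
    LinearMap.ext₂ (toLinearMap₂'_apply' J)
  rw [this]
  infer_instance

/-- The standard symplectic form `(v, w) ↦ v₀ w₁ - v₁ w₀` on `A²`. -/
def symplecticForm (A : Type*) [CommRing A] : (Fin 2 → A) →ₗ[A] (Fin 2 → A) →ₗ[A] A :=
  toLinearMap₂' A !![0, 1; -1, 0]

instance isPerfPair_symplecticForm : (symplecticForm A).IsPerfPair :=
  isPerfPair_toLinearMap₂' ((isUnit_iff_isUnit_det _).2 (by simp [det_fin_two]))

lemma isAdjointPair_symplecticForm_adjugate (M : Matrix (Fin 2) (Fin 2) A) :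
    LinearMap.IsAdjointPair (symplecticForm A) (symplecticForm A) M.toLin' M.adjugate.toLin' := by
  refine isAdjointPair_toLinearMap₂' _ _ _ _ |>.2 ?_
  ext i j
  fin_cases i <;> fin_cases j <;> simp [adjugate_fin_two, mul_apply]

lemma isPeriodicDuality_adjugate {M : Matrix (Fin 2) (Fin 2) A}
    (h : Function.Exact M.toLin' M.adjugate.toLin')
    (h' : Function.Exact M.adjugate.toLin' M.toLin') :
    IsPeriodicDuality (symplecticForm A) M.toLin' M.adjugate.toLin' M.adjugate.toLin' M.toLin' where
  exact_fg := h
  exact_gf := h'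
  exact_fg' := h'
  exact_gf' := h
  adjoint_f := isAdjointPair_symplecticForm_adjugate M
  adjoint_g := by
    have adjugate_adjugate_eq : M.adjugate.adjugate = M := by simp [adjugate_adjugate']
    simpa only [adjugate_adjugate_eq, LinearMap.IsAdjointPair] using
      isAdjointPair_symplecticForm_adjugate M.adjugate

end AdjugatePairing

section ExactZeroDivisorPair

variable {A : Type*} [CommRing A] {x y : A}

lemma IsExactZeroDivisorPair.symm (h : IsExactZeroDivisorPair x y) : IsExactZeroDivisorPair y x :=
  ⟨h.2.1, h.1, h.2.2.2, h.2.2.1⟩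

lemma IsExactZeroDivisorPair.mul_eq_zero_iff (h : IsExactZeroDivisorPair x y) {b : A} :
    x * b = 0 ↔ y ∣ b := by
  rw [mul_comm, h.2.2.1, Ideal.mem_span_singleton]

lemma adjugate_gammaMat (x y a : A) : (gammaMat x y a).adjugate = etaMat x y a := by
  simp [gammaMat, etaMat, Matrix.adjugate_fin_two_of]

lemma exact_gammaMat_etaMat (h : IsExactZeroDivisorPair x y) (a : A) :
    Function.Exact (gammaMat x y a).toLin' (etaMat x y a).toLin' := by
  refine LinearMap.exact_of_comp_of_mem_range ?_ fun v hv => ?_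
  · rw [← Matrix.toLin'_mul, ← adjugate_gammaMat, Matrix.adjugate_mul,
      show (gammaMat x y a).det = 0 by simp [gammaMat, h.mul_eq_zero_iff], zero_smul, map_zero]
  · have hv0 : y * v 0 - a * v 1 = 0 := by
      simpa [etaMat, Matrix.vecHead, Matrix.vecTail, sub_eq_add_neg] using congrFun hv 0
    have hv1 : x * v 1 = 0 := by simpa [etaMat, Matrix.vecHead, Matrix.vecTail] using congrFun hv 1
    obtain ⟨w₁, hw₁⟩ := h.mul_eq_zero_iff.1 hv1
    obtain ⟨w₀, hw₀⟩ : x ∣ v 0 - a * w₁ :=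
      h.symm.mul_eq_zero_iff.1 (by linear_combination hv0 + a * hw₁)
    refine ⟨![w₀, w₁], ?_⟩
    ext i
    fin_cases i
    · simpa [gammaMat, mul_comm, ← eq_sub_iff_add_eq] using hw₀.symm
    · simpa [gammaMat, mul_comm] using hw₁.symm

lemma exact_etaMat_gammaMat (h : IsExactZeroDivisorPair x y) (a : A) :
    Function.Exact (etaMat x y a).toLin' (gammaMat x y a).toLin' := by
  simpa [gammaMat, etaMat] using exact_gammaMat_etaMat h.symm (-a)

lemma isPeriodicDuality_gammaMat_etaMat (h : IsExactZeroDivisorPair x y) (a : A) :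
    IsPeriodicDuality (symplecticForm A) (gammaMat x y a).toLin' (etaMat x y a).toLin'
      (etaMat x y a).toLin' (gammaMat x y a).toLin' := by
  have hγη := exact_gammaMat_etaMat h a
  have hηγ := exact_etaMat_gammaMat h a
  rw [← adjugate_gammaMat] at hγη hηγ ⊢
  exact isPeriodicDuality_adjugate hγη hηγ

end ExactZeroDivisorPair

theorem isTotallyReflexive_G_H_general {A : Type u} [CommRing A] {x y : A}
    (hxy : IsExactZeroDivisorPair x y) (a : A) :
    IsTotallyReflexive A (Gmod x y a) ∧ IsTotallyReflexive A (Hmod x y a) ∧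
    Nonempty (Gmod x y a ≃ₗ[A] Module.Dual A (Hmod x y a)) ∧
    Nonempty (Hmod x y a ≃ₗ[A] Module.Dual A (Gmod x y a)) :=
  have h := isPeriodicDuality_gammaMat_etaMat hxy a
  ⟨h.isTotallyReflexive_coker, h.flip.isTotallyReflexive_coker, ⟨h.cokerPairing.toPerfPair⟩,
    ⟨h.cokerPairing.flip.toPerfPair⟩⟩

/-- **Proposition (3.4).** For an exact pair of zero divisors `x, y` and any
`a ∈ A`, the modules `G_a = coker γ_a` and `H_a = coker η_a` are totally
reflexive, and they are each other's duals: `G_a ≅ Hom_A(H_a, A)` and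
`H_a ≅ Hom_A(G_a, A)`. -/
theorem isTotallyReflexive_G_H {A : Type u} [CommRing A] [IsNoetherianRing A]
    [IsLocalRing A] {x y : A} (hxy : IsExactZeroDivisorPair x y) (a : A) :
    IsTotallyReflexive A (Gmod x y a) ∧ IsTotallyReflexive A (Hmod x y a) ∧
    Nonempty (Gmod x y a ≃ₗ[A] Module.Dual A (Hmod x y a)) ∧
    Nonempty (Hmod x y a ≃ₗ[A] Module.Dual A (Gmod x y a)) :=
  isTotallyReflexive_G_H_general hxy a
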